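/- Let $d \ge 1$ and let $X \subseteq \mathbb{R}^d$ be a finite acute set. Suppose $s > 0$ is such that $\langle y - x, z - x \rangle \ge s$ for all $x, y, z \in X$ with $y \ne x$ and $z \ne x$, and let $r > 0$ satisfy $4r^2 < s$. Let $\phi : X \to \mathbb{R}^2$ be a map with $\lVert \phi(x) \rVert = r$ for all $x \in X$, and such that the $2|X|$ points $\pm\phi(x)$, $x \in X$, are pairwise distinct (i.e. for all $x, y \in X$, $\phi(x) = \phi(y)$ implies $x = y$, and $\phi(x) \ne -\phi(y)$ for all $x, y \in X$). Then the set $Y := \{(x, \varepsilon \phi(x)) : x \in X, \varepsilon \in \{+1, -1\}\} \subseteq \mathbb{R}^{d+2}$ is an acute set. -/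

import Mathlib

open RealInnerProductSpace
open scoped Classical

/-- A finite set of points in a real inner product space is *acute* if any three
distinct points of it form an acute angle. -/
def IsAcuteSet {E : Type*} [NormedAddCommGroup E] [InnerProductSpace ℝ E]
    (X : Finset E) : Prop :=
  ∀ x ∈ X, ∀ y ∈ X, ∀ z ∈ X, y ≠ x → z ≠ x → y ≠ z → 0 < ⟪y - x, z - x⟫

/-!
Over three distinct points of `X` the first coordinates contribute more than `r ^ 2 / 2`, while on
a sphere of radius `r` the product `⟪b - a, c - a⟫` never drops below `-(r ^ 2 / 2)`. When two of
the three points lie over the same `x`, their second coordinates are antipodal, and Thales' theorem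
on the sphere settles the sign.
-/

section SignedGraph

variable {E F : Type*} {φ : E → F} {X : Set E} {r : ℝ} {p q : WithLp 2 (E × F)}

/-- The union of the graphs of `φ` and `-φ` over `X`, in the Euclidean product `E × F`: the
doubling of `X` whose acuteness is at stake. -/
def signedGraph [Neg F] (φ : E → F) (X : Set E) : Set (WithLp 2 (E × F)) :=
  {p | p.fst ∈ X ∧ (p.snd = φ p.fst ∨ p.snd = -φ p.fst)}

theorem snd_eq_neg_snd_of_mem_signedGraph [InvolutiveNeg F]
    (hp : p ∈ signedGraph φ X) (hq : q ∈ signedGraph φ X) (hfst : q.fst = p.fst)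
    (hqp : q ≠ p) : q.snd = -p.snd := by
  have hsnd : q.snd ≠ p.snd := fun h => hqp (WithLp.ofLp_injective 2 (Prod.ext hfst h))
  obtain ⟨-, hp | hp⟩ := hp <;> obtain ⟨-, hq | hq⟩ := hq <;> simp_all

theorem snd_ne_snd_of_mem_signedGraph [InvolutiveNeg F] (hinj : X.InjOn φ)
    (hneg : X.Pairwise fun x y => φ x ≠ -φ y)
    (hp : p ∈ signedGraph φ X) (hq : q ∈ signedGraph φ X) (hfst : q.fst ≠ p.fst) :
    q.snd ≠ p.snd := by
  obtain ⟨hpX, hp | hp⟩ := hp <;> obtain ⟨hqX, hq | hq⟩ := hq <;> rw [hp, hq]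
  · exact hinj.ne hqX hpX hfst
  · exact (hneg hpX hqX hfst.symm).symm
  · exact hneg hqX hpX hfst
  · exact neg_injective.ne (hinj.ne hqX hpX hfst)

theorem norm_snd_of_mem_signedGraph [SeminormedAddGroup F] (hnorm : ∀ x ∈ X, ‖φ x‖ = r)
    (hp : p ∈ signedGraph φ X) : ‖p.snd‖ = r := by
  obtain ⟨hpX, h | h⟩ := hp <;> simp only [h, norm_neg, hnorm _ hpX]

theorem coe_image_union_image_neg_eq_signedGraph [Neg F] [DecidableEq (WithLp 2 (E × F))]
    (φ : E → F) (X : Finset E) :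
    (((X.image fun x => (WithLp.equiv 2 (E × F)).symm (x, φ x)) ∪
      (X.image fun x => (WithLp.equiv 2 (E × F)).symm (x, -φ x)) : Finset (WithLp 2 (E × F))) :
        Set (WithLp 2 (E × F))) = signedGraph φ X := by
  ext p
  simp only [Finset.coe_union, Finset.coe_image, Set.mem_union, Set.mem_image, Finset.mem_coe]
  constructor
  · rintro (⟨x, hx, rfl⟩ | ⟨x, hx, rfl⟩)
    · exact ⟨hx, Or.inl rfl⟩
    · exact ⟨hx, Or.inr rfl⟩
  · rintro ⟨hx, h | h⟩
    · exact Or.inl ⟨p.fst, hx, by rw [← h]; rfl⟩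
    · exact Or.inr ⟨p.fst, hx, by rw [← h]; rfl⟩

end SignedGraph

section Inner

variable {E F : Type*} [NormedAddCommGroup E] [InnerProductSpace ℝ E]
  [NormedAddCommGroup F] [InnerProductSpace ℝ F]

/-- Acuteness with margin `m`, for possibly infinite sets: the inner product at the vertex of every
triple of distinct points exceeds `m`. The case `m = 0` is ordinary acuteness. -/
def IsAcuteWithMargin (m : ℝ) (S : Set E) : Prop :=
  ∀ x ∈ S, ∀ y ∈ S, ∀ z ∈ S, y ≠ x → z ≠ x → y ≠ z → m < ⟪y - x, z - x⟫

theorem isAcuteSet_iff_isAcuteWithMargin_zero {S : Finset E} :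
    IsAcuteSet S ↔ IsAcuteWithMargin 0 (S : Set E) :=
  Iff.rfl

variable {φ : E → F} {X : Set E} {r : ℝ} {a b c : F} {p q w : WithLp 2 (E × F)}

theorem inner_sub_neg_sub_eq_zero (h : ‖a‖ = ‖b‖) : ⟪b - a, -b - a⟫ = 0 := by
  rw [← neg_add', inner_neg_right, real_inner_comm, (real_inner_add_sub_eq_zero_iff b a).2 h.symm,
    neg_zero]

theorem inner_neg_sub_self_sub_pos (h : ‖a‖ = ‖c‖) (hca : c ≠ a) : 0 < ⟪-a - a, c - a⟫ := by
  have thales : ⟪-c - a, c - a⟫ = 0 := by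
    rw [real_inner_comm, inner_sub_neg_sub_eq_zero h]
  calc
    0 < ⟪c - a, c - a⟫ := real_inner_self_pos.2 (sub_ne_zero.2 hca)
    _ = ⟪-c - a, c - a⟫ + ⟪c - a, c - a⟫ := by rw [thales, zero_add]
    _ = ⟪-a - a, c - a⟫ := by rw [← inner_add_left]; congr 1; abel

theorem neg_sq_div_two_le_inner_sub_sub (ha : ‖a‖ = r) (hb : ‖b‖ = r) (hc : ‖c‖ = r) :
    -(r ^ 2 / 2) ≤ ⟪b - a, c - a⟫ := by
  have expand : ‖b + c - a‖ ^ 2 = 2 * ⟪b - a, c - a⟫ + r ^ 2 := by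
    rw [norm_sub_sq_real, norm_add_sq_real, ha, hb, hc]
    simp only [inner_sub_left, inner_sub_right, inner_add_left, real_inner_self_eq_norm_sq, ha,
      real_inner_comm c a]
    ring
  linarith [sq_nonneg ‖b + c - a‖]

theorem inner_sub_sub_withLp_prod (p q w : WithLp 2 (E × F)) :
    ⟪q - p, w - p⟫ = ⟪q.fst - p.fst, w.fst - p.fst⟫ + ⟪q.snd - p.snd, w.snd - p.snd⟫ :=
  WithLp.prod_inner_apply _ _

theorem inner_sub_sub_pos_of_fst_eq (hnorm : ∀ x ∈ X, ‖φ x‖ = r) (hinj : X.InjOn φ)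
    (hneg : X.Pairwise fun x y => φ x ≠ -φ y)
    (hp : p ∈ signedGraph φ X) (hq : q ∈ signedGraph φ X) (hw : w ∈ signedGraph φ X)
    (hqp : q ≠ p) (hwp : w ≠ p) (hqw : q ≠ w) (hfst : q.fst = p.fst) :
    0 < ⟪q - p, w - p⟫ := by
  have hq_neg : q.snd = -p.snd := snd_eq_neg_snd_of_mem_signedGraph hp hq hfst hqp
  have hw_fst : w.fst ≠ p.fst := fun h =>
    hqw <| WithLp.ofLp_injective 2 <| Prod.ext (hfst.trans h.symm) <|
      hq_neg.trans (snd_eq_neg_snd_of_mem_signedGraph hp hw h hwp).symm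
  have hnorm_eq : ‖p.snd‖ = ‖w.snd‖ := by
    rw [norm_snd_of_mem_signedGraph hnorm hp, norm_snd_of_mem_signedGraph hnorm hw]
  rw [inner_sub_sub_withLp_prod, hfst, sub_self, inner_zero_left, zero_add, hq_neg]
  exact inner_neg_sub_self_sub_pos hnorm_eq (snd_ne_snd_of_mem_signedGraph hinj hneg hp hw hw_fst)

-- The margin is sharp: equality in `neg_sq_div_two_le_inner_sub_sub` occurs at `a = b + c`.
theorem doubled_set_is_acute_general (hX : IsAcuteWithMargin (r ^ 2 / 2) X)
    (hnorm : ∀ x ∈ X, ‖φ x‖ = r) (hinj : X.InjOn φ)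
    (hneg : X.Pairwise fun x y => φ x ≠ -φ y) :
    IsAcuteWithMargin 0 (signedGraph φ X) := by
  intro p hp q hq w hw hqp hwp hqw
  have norm_snd {v} (hv : v ∈ signedGraph φ X) : ‖v.snd‖ = r :=
    norm_snd_of_mem_signedGraph hnorm hv
  by_cases hqp_fst : q.fst = p.fst
  · exact inner_sub_sub_pos_of_fst_eq hnorm hinj hneg hp hq hw hqp hwp hqw hqp_fst
  by_cases hwp_fst : w.fst = p.fst
  · rw [real_inner_comm]
    exact inner_sub_sub_pos_of_fst_eq hnorm hinj hneg hp hw hq hwp hqp hqw.symm hwp_fst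
  rw [inner_sub_sub_withLp_prod]
  by_cases hwq_fst : w.fst = q.fst
  · rw [snd_eq_neg_snd_of_mem_signedGraph hq hw hwq_fst hqw.symm, hwq_fst,
      inner_sub_neg_sub_eq_zero ((norm_snd hp).trans (norm_snd hq).symm), add_zero]
    exact real_inner_self_pos.2 (sub_ne_zero.2 hqp_fst)
  · have hfst := hX _ hp.1 _ hq.1 _ hw.1 hqp_fst hwp_fst (Ne.symm hwq_fst)
    have hsnd := neg_sq_div_two_le_inner_sub_sub (norm_snd hp) (norm_snd hq) (norm_snd hw)
    linarith

end Inner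

theorem doubled_set_is_acute (d : ℕ) (hd : 1 ≤ d)
    (X : Finset (EuclideanSpace ℝ (Fin d))) (hacute : IsAcuteSet X)
    (s r : ℝ) (hs : 0 < s)
    (hlow : ∀ x ∈ X, ∀ y ∈ X, ∀ z ∈ X, y ≠ x → z ≠ x → s ≤ ⟪y - x, z - x⟫)
    (hr : 0 < r) (hrs : 4 * r ^ 2 < s)
    (φ : EuclideanSpace ℝ (Fin d) → EuclideanSpace ℝ (Fin 2))
    (hnorm : ∀ x ∈ X, ‖φ x‖ = r)
    (hinj : ∀ x ∈ X, ∀ y ∈ X, φ x = φ y → x = y)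
    (hneg : ∀ x ∈ X, ∀ y ∈ X, φ x ≠ -φ y) :
    IsAcuteSet
      ((X.image fun x =>
          (WithLp.equiv 2 (EuclideanSpace ℝ (Fin d) × EuclideanSpace ℝ (Fin 2))).symm
            (x, φ x)) ∪
        (X.image fun x =>
          (WithLp.equiv 2 (EuclideanSpace ℝ (Fin d) × EuclideanSpace ℝ (Fin 2))).symm
            (x, -φ x))) := by
  rw [isAcuteSet_iff_isAcuteWithMargin_zero, coe_image_union_image_neg_eq_signedGraph]
  exact doubled_set_is_acute_general
    (fun x hx y hy z hz hyx hzx _ => by linarith [hlow x hx y hy z hz hyx hzx, sq_nonneg r])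
    hnorm hinj fun x hx y hy _ => hneg x hx y hy
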